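/- Let y ∈ {-1,1}, μ ∈ ℝ, σ > 0, z = yμ/√(1+σ²), η = Φ(z). The variance of the tilted density p(x) = η⁻¹ Φ(y x) φ(x; μ, σ²) equals σ̂² = σ² − (σ⁴ φ(z)/((1+σ²) η)) · (z + φ(z)/η). -/

import Mathlib

open MeasureTheory

noncomputable def stdPdf (x : ℝ) : ℝ :=
  (Real.sqrt (2 * Real.pi))⁻¹ * Real.exp (-x ^ 2 / 2)

noncomputable def stdCdf (x : ℝ) : ℝ := ∫ u in Set.Iic x, stdPdf u

noncomputable def gPdf (μ σ x : ℝ) : ℝ :=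
  (σ * Real.sqrt (2 * Real.pi))⁻¹ * Real.exp (-(x - μ) ^ 2 / (2 * σ ^ 2))

/-!
Write the integrals against the Gaussian as expectations over a standard normal variable `w`.
Standardizing `x = σ w + μ` turns the tilt `Φ(a x + b)` into `Φ(c w + s z)` with `c = a σ`,
`s = √(1 + c²)` and `s z = a μ + b`, so the variance is `σ² (m₂ / m₀ - (m₁ / m₀)²)` for the moments
`mₖ = E[wᵏ Φ(c w + s z)]`. Stein's identity expresses `m₁` and `m₂` through `m₀` and the moments of
`φ(c w + s z)`, which follow from the rotation identity
`φ(c w + s z) φ(w) = φ(z) φ(s w + c z)`. Finally `m₀ = Φ(z)`, by writing `Φ(c w + s z)` as the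
integral of `φ(c w + u)` over `u ≤ s z` and exchanging the integrals.
-/

open Filter ProbabilityTheory Real Set Topology

section StandardNormal

lemma stdPdf_eq_gaussianPDFReal : stdPdf = gaussianPDFReal 0 1 := by
  ext x
  simp [stdPdf, gaussianPDFReal]

lemma stdCdf_eq_cdf : stdCdf = cdf (gaussianReal 0 1) := by
  ext x
  rw [cdf_eq_real, measureReal_def, gaussianReal_apply_eq_integral _ one_ne_zero,
    ENNReal.toReal_ofReal (integral_nonneg fun u => gaussianPDFReal_nonneg 0 1 u), stdCdf,
    stdPdf_eq_gaussianPDFReal]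

lemma stdPdf_pos (x : ℝ) : 0 < stdPdf x := by
  rw [stdPdf_eq_gaussianPDFReal]
  exact gaussianPDFReal_pos 0 1 x one_ne_zero

lemma stdPdf_mul_stdPdf_eq_of_sq_add_sq_eq {x y u v : ℝ} (h : x ^ 2 + y ^ 2 = u ^ 2 + v ^ 2) :
    stdPdf x * stdPdf y = stdPdf u * stdPdf v := by
  simp only [stdPdf, mul_mul_mul_comm _ (exp _), ← exp_add]
  congr 2
  linear_combination -h / 2

lemma norm_stdPdf_le (x : ℝ) : ‖stdPdf x‖ ≤ (√(2 * π))⁻¹ := by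
  rw [norm_of_nonneg (stdPdf_pos x).le, stdPdf]
  refine mul_le_of_le_one_right (by positivity) (exp_le_one_iff.2 ?_)
  linarith [sq_nonneg x]

lemma hasDerivAt_stdPdf (x : ℝ) : HasDerivAt stdPdf (-x * stdPdf x) x := by
  have h := (((hasDerivAt_id x).pow 2).neg.div_const 2).exp.const_mul (√(2 * π))⁻¹
  refine h.congr_deriv ?_
  simp only [stdPdf, Pi.neg_apply, Pi.pow_apply, id_eq]
  ring

@[fun_prop]
lemma continuous_stdPdf : Continuous stdPdf := by
  unfold stdPdf
  fun_prop

lemma integrable_stdPdf : Integrable stdPdf := by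
  rw [stdPdf_eq_gaussianPDFReal]
  exact integrable_gaussianPDFReal 0 1

lemma integral_stdPdf : ∫ x, stdPdf x = 1 := by
  rw [stdPdf_eq_gaussianPDFReal]
  exact integral_gaussianPDFReal_eq_one 0 one_ne_zero

lemma integrable_pow_mul_stdPdf (k : ℕ) : Integrable fun x => x ^ k * stdPdf x := by
  have h := integrable_rpow_mul_exp_neg_mul_sq (b := 1 / 2) (by norm_num)
    (s := k) (neg_one_lt_zero.trans_le k.cast_nonneg)
  refine (h.const_mul (√(2 * π))⁻¹).congr (.of_forall fun x => ?_)
  simp only [rpow_natCast, stdPdf]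
  ring_nf

lemma integral_id_mul_stdPdf : ∫ x, x * stdPdf x = 0 := by
  have hint : Integrable fun x => -x * stdPdf x := by
    simpa using (integrable_pow_mul_stdPdf 1).neg
  have h := integral_eq_zero_of_hasDerivAt_of_integrable hasDerivAt_stdPdf hint integrable_stdPdf
  simpa only [neg_mul, integral_neg, neg_eq_zero] using h

lemma hasDerivAt_stdCdf (x : ℝ) : HasDerivAt stdCdf (stdPdf x) x := by
  have h : stdCdf = fun a => (∫ u in (0 : ℝ)..a, stdPdf u) + stdCdf 0 := by
    ext a
    rw [← intervalIntegral.integral_Iic_sub_Iic integrable_stdPdf.integrableOn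
      integrable_stdPdf.integrableOn, stdCdf, stdCdf, sub_add_cancel]
  rw [h]
  exact (continuous_stdPdf.integral_hasStrictDerivAt 0 x).hasDerivAt.add_const _

@[fun_prop]
lemma continuous_stdCdf : Continuous stdCdf :=
  continuous_iff_continuousAt.2 fun x => (hasDerivAt_stdCdf x).continuousAt

lemma stdCdf_pos (x : ℝ) : 0 < stdCdf x := by
  have hnonneg : 0 ≤ stdCdf (x - 1) := by
    rw [stdCdf_eq_cdf]
    exact cdf_nonneg _ _
  exact hnonneg.trans_lt (strictMono_of_hasDerivAt_pos hasDerivAt_stdCdf stdPdf_pos (sub_one_lt x))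

lemma norm_stdCdf_le_one (x : ℝ) : ‖stdCdf x‖ ≤ 1 := by
  rw [norm_of_nonneg (stdCdf_pos x).le, stdCdf_eq_cdf]
  exact cdf_le_one _ _

lemma tendsto_stdCdf_atBot : Tendsto stdCdf atBot (𝓝 0) := by
  rw [stdCdf_eq_cdf]
  exact tendsto_cdf_atBot _

end StandardNormal

section AffineSubstitution

lemma hasDerivAt_comp_affine {f : ℝ → ℝ} {f' s t x : ℝ} (hf : HasDerivAt f f' (s * x + t)) :
    HasDerivAt (fun x => f (s * x + t)) (s * f') x := by
  have haff : HasDerivAt (fun x => s * x + t) s x := by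
    simpa using ((hasDerivAt_id x).const_mul s).add_const t
  exact (hf.comp x haff).congr_deriv (mul_comm _ _)

lemma integral_comp_affine {E : Type*} [NormedAddCommGroup E] [NormedSpace ℝ E] (g : ℝ → E)
    (s t : ℝ) : ∫ x, g (s * x + t) = |s⁻¹| • ∫ x, g x := by
  rw [Measure.integral_comp_mul_left (fun x => g (x + t)), integral_add_right_eq_self]

lemma integrable_stdPdf_comp_affine {s : ℝ} (hs : s ≠ 0) (t : ℝ) :
    Integrable fun x => stdPdf (s * x + t) :=
  (integrable_stdPdf.comp_add_right t).comp_mul_left' hs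

lemma setIntegral_Iic_stdPdf_comp_affine {s : ℝ} (hs : 0 < s) (t d : ℝ) :
    ∫ u in Iic d, s * stdPdf (s * u + t) = stdCdf (s * d + t) := by
  have hlim : Tendsto (fun u => stdCdf (s * u + t)) atBot (𝓝 0) :=
    tendsto_stdCdf_atBot.comp (tendsto_atBot_add_const_right _ t (tendsto_id.const_mul_atBot hs))
  rw [integral_Iic_of_hasDerivAt_of_tendsto'
    (fun u _ => hasDerivAt_comp_affine (hasDerivAt_stdCdf (s * u + t)))
    ((integrable_stdPdf_comp_affine hs.ne' t).const_mul s).integrableOn hlim, sub_zero]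

lemma setIntegral_Iic_stdPdf_const_add (t d : ℝ) :
    ∫ u in Iic d, stdPdf (t + u) = stdCdf (t + d) := by
  simpa only [one_mul, add_comm t] using setIntegral_Iic_stdPdf_comp_affine one_pos t d

lemma integral_mul_gPdf (f : ℝ → ℝ) (μ : ℝ) {σ : ℝ} (hσ : 0 < σ) :
    ∫ x, f x * gPdf μ σ x = ∫ w, f (σ * w + μ) * stdPdf w := by
  have hpdf (w : ℝ) : stdPdf w = σ * gPdf μ σ (σ * w + μ) := by
    rw [gPdf, stdPdf, show -(σ * w + μ - μ) ^ 2 / (2 * σ ^ 2) = -w ^ 2 / 2 by field_simp; ring]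
    field_simp
  calc ∫ x, f x * gPdf μ σ x
      = σ * ∫ w, f (σ * w + μ) * gPdf μ σ (σ * w + μ) := by
        rw [integral_comp_affine (fun x => f x * gPdf μ σ x), abs_of_pos (inv_pos.2 hσ),
          smul_eq_mul, mul_inv_cancel_left₀ hσ.ne']
    _ = ∫ w, f (σ * w + μ) * stdPdf w := by
        simp only [hpdf, ← integral_const_mul, mul_left_comm]

end AffineSubstitution

/-- The moment `E[wᵏ f(w)]` for a standard normal variable `w`: the `k`-th moment of the standard
normal density reweighted by `f`, without normalization. -/
noncomputable def weightedMoment (f : ℝ → ℝ) (k : ℕ) : ℝ :=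
  ∫ x, x ^ k * f x * stdPdf x

section WeightedMoment

variable {f f' : ℝ → ℝ} {C C' : ℝ}

lemma integrable_pow_mul_mul_stdPdf (hf : Measurable f) (hC : ∀ x, ‖f x‖ ≤ C) (k : ℕ) :
    Integrable fun x => x ^ k * f x * stdPdf x :=
  ((integrable_pow_mul_stdPdf k).bdd_mul hf.aestronglyMeasurable (.of_forall hC)).congr
    (.of_forall fun x => by ring)

lemma weightedMoment_const_mul (c : ℝ) (f : ℝ → ℝ) (k : ℕ) :
    weightedMoment (fun x => c * f x) k = c * weightedMoment f k := by
  simp only [weightedMoment, ← integral_const_mul]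
  congr! 2
  ring

/-- Stein's identity `E[w g(w)] = E[g'(w)]` for `g(w) = wᵏ f(w)`; at `k = 0` the factor `k` kills
the truncated `k - 1`. -/
lemma weightedMoment_succ (hderiv : ∀ x, HasDerivAt f (f' x) x) (hC : ∀ x, ‖f x‖ ≤ C)
    (hC' : ∀ x, ‖f' x‖ ≤ C') (k : ℕ) :
    weightedMoment f (k + 1) = k * weightedMoment f (k - 1) + weightedMoment f' k := by
  have hf : Continuous f := continuous_iff_continuousAt.2 fun x => (hderiv x).continuousAt
  have hf' : Measurable f' := by
    rw [← funext fun x => (hderiv x).deriv]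
    exact measurable_deriv f
  have hint := integrable_pow_mul_mul_stdPdf hf.measurable hC
  have hint' := integrable_pow_mul_mul_stdPdf hf' hC' k
  have hsum := ((hint (k - 1)).const_mul k).fun_add hint'
  have h := integral_eq_zero_of_hasDerivAt_of_integrable
    (fun x => (((hasDerivAt_pow k x).mul (hderiv x)).mul (hasDerivAt_stdPdf x)).congr_deriv
      (g' := (k * (x ^ (k - 1) * f x * stdPdf x) + x ^ k * f' x * stdPdf x) -
        x ^ (k + 1) * f x * stdPdf x) (by simp only [Pi.mul_apply]; ring))
    (hsum.sub (hint (k + 1))) (hint k)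
  rw [integral_sub hsum (hint (k + 1)), integral_add ((hint (k - 1)).const_mul k) hint',
    integral_const_mul, sub_eq_zero] at h
  exact h.symm

lemma integral_quadratic_mul_mul_stdPdf (hf : Measurable f) (hC : ∀ x, ‖f x‖ ≤ C) (α β γ : ℝ) :
    ∫ x, (α * x ^ 2 + β * x + γ) * f x * stdPdf x =
      α * weightedMoment f 2 + β * weightedMoment f 1 + γ * weightedMoment f 0 := by
  have hint (δ : ℝ) (k : ℕ) := (integrable_pow_mul_mul_stdPdf hf hC k).const_mul δ
  simp only [weightedMoment, ← integral_const_mul]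
  rw [← integral_add (hint α 2) (hint β 1),
    ← integral_add ((hint α 2).fun_add (hint β 1)) (hint γ 0)]
  congr! 2
  ring

end WeightedMoment

section WeightedGaussian

variable {f : ℝ → ℝ} {C : ℝ}

lemma integral_id_mul_mul_gPdf (hf : Measurable f) (hC : ∀ x, ‖f x‖ ≤ C) (μ : ℝ) {σ : ℝ}
    (hσ : 0 < σ) :
    ∫ x, x * f x * gPdf μ σ x = σ * weightedMoment (fun w => f (σ * w + μ)) 1 +
      μ * weightedMoment (fun w => f (σ * w + μ)) 0 := by
  have h := integral_quadratic_mul_mul_stdPdf (f := fun w => f (σ * w + μ)) (by fun_prop)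
    (fun w => hC _) 0 σ μ
  rw [integral_mul_gPdf _ μ hσ]
  simpa only [zero_mul, zero_add] using h

lemma integral_sub_sq_mul_mul_gPdf (hf : Measurable f) (hC : ∀ x, ‖f x‖ ≤ C) (μ : ℝ) {σ : ℝ}
    (hσ : 0 < σ) (t : ℝ) :
    ∫ x, (x - t) ^ 2 * f x * gPdf μ σ x = σ ^ 2 * weightedMoment (fun w => f (σ * w + μ)) 2 +
      2 * σ * (μ - t) * weightedMoment (fun w => f (σ * w + μ)) 1 +
      (μ - t) ^ 2 * weightedMoment (fun w => f (σ * w + μ)) 0 := by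
  rw [integral_mul_gPdf _ μ hσ, ← integral_quadratic_mul_mul_stdPdf (by fun_prop) fun w => hC _]
  congr! 3
  ring

lemma variance_weighted_gPdf (hf : Measurable f) (hC : ∀ x, ‖f x‖ ≤ C) (μ : ℝ) {σ : ℝ}
    (hσ : 0 < σ) {η μhat : ℝ} (hη : η = weightedMoment (fun w => f (σ * w + μ)) 0) (hη0 : η ≠ 0)
    (hμhat : μhat = ∫ x, x * (η⁻¹ * f x * gPdf μ σ x)) :
    ∫ x, (x - μhat) ^ 2 * (η⁻¹ * f x * gPdf μ σ x) =
      σ ^ 2 * (weightedMoment (fun w => f (σ * w + μ)) 2 / η -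
        (weightedMoment (fun w => f (σ * w + μ)) 1 / η) ^ 2) := by
  have hnorm (q : ℝ → ℝ) :
      ∫ x, q x * (η⁻¹ * f x * gPdf μ σ x) = η⁻¹ * ∫ x, q x * f x * gPdf μ σ x := by
    rw [← integral_const_mul]
    congr! 2
    ring
  have hmean : μhat = μ + σ * weightedMoment (fun w => f (σ * w + μ)) 1 / η := by
    rw [hμhat, hnorm (fun x => x), integral_id_mul_mul_gPdf hf hC μ hσ, ← hη]
    field_simp
    ring
  rw [hnorm, integral_sub_sq_mul_mul_gPdf hf hC μ hσ, ← hη, hmean]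
  field_simp
  ring

end WeightedGaussian

section ProbitWeight

variable {c s : ℝ}

lemma stdPdf_comp_affine_mul_stdPdf (hsc : s ^ 2 = 1 + c ^ 2) (z x : ℝ) :
    stdPdf (c * x + s * z) * stdPdf x = stdPdf z * stdPdf (s * x + c * z) :=
  stdPdf_mul_stdPdf_eq_of_sq_add_sq_eq (by linear_combination (z ^ 2 - x ^ 2) * hsc)

lemma weightedMoment_stdPdf_comp_affine_zero (hs : 0 < s) (hsc : s ^ 2 = 1 + c ^ 2) (z : ℝ) :
    weightedMoment (fun x => stdPdf (c * x + s * z)) 0 = stdPdf z / s := by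
  simp only [weightedMoment, pow_zero, one_mul, stdPdf_comp_affine_mul_stdPdf hsc]
  rw [integral_const_mul, integral_comp_affine, integral_stdPdf, smul_eq_mul, mul_one,
    abs_of_pos (inv_pos.2 hs), div_eq_mul_inv]

lemma weightedMoment_stdPdf_comp_affine_one (hs : 0 < s) (hsc : s ^ 2 = 1 + c ^ 2) (z : ℝ) :
    weightedMoment (fun x => stdPdf (c * x + s * z)) 1 = -(c * z * stdPdf z / s ^ 2) := by
  have hint : Integrable fun v => v * stdPdf v := by
    simpa only [pow_one] using integrable_pow_mul_stdPdf 1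
  calc weightedMoment (fun x => stdPdf (c * x + s * z)) 1
      = ∫ x, x * (stdPdf z * stdPdf (s * x + c * z)) := by
        simp only [weightedMoment, pow_one, mul_assoc, stdPdf_comp_affine_mul_stdPdf hsc]
    _ = stdPdf z / s * ∫ x, (s * x + c * z - c * z) * stdPdf (s * x + c * z) := by
        rw [← integral_const_mul]
        congr! 2
        field_simp
        ring
    _ = stdPdf z / s * (s⁻¹ * ∫ v, (v - c * z) * stdPdf v) := by
        rw [integral_comp_affine fun v => (v - c * z) * stdPdf v, smul_eq_mul,
          abs_of_pos (inv_pos.2 hs)]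
    _ = -(c * z * stdPdf z / s ^ 2) := by
        simp only [sub_mul]
        rw [integral_sub hint (integrable_stdPdf.const_mul _), integral_const_mul,
          integral_id_mul_stdPdf, integral_stdPdf]
        field_simp
        ring

lemma integrable_prod_stdPdf_affine_mul_stdPdf (c d : ℝ) :
    Integrable (fun q : ℝ × ℝ => stdPdf (c * q.1 + q.2) * stdPdf q.1)
      (volume.prod (volume.restrict (Iic d))) := by
  have hcont : Continuous fun q : ℝ × ℝ => stdPdf (c * q.1 + q.2) * stdPdf q.1 := by fun_prop
  have hnorm (x : ℝ) : ∫ u in Iic d, ‖stdPdf (c * x + u) * stdPdf x‖ =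
      stdCdf (c * x + d) * stdPdf x := by
    simp only [norm_of_nonneg (mul_pos (stdPdf_pos _) (stdPdf_pos _)).le, integral_mul_const,
      setIntegral_Iic_stdPdf_const_add]
  refine (integrable_prod_iff hcont.aestronglyMeasurable).2 ⟨.of_forall fun x => ?_, ?_⟩
  · exact ((integrable_stdPdf.comp_add_left (c * x)).mul_const (stdPdf x)).restrict
  · simp only [hnorm]
    exact integrable_stdPdf.bdd_mul (by fun_prop) (.of_forall fun x => norm_stdCdf_le_one _)

lemma weightedMoment_stdCdf_comp_affine_zero (hs : 0 < s) (hsc : s ^ 2 = 1 + c ^ 2) (z : ℝ) :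
    weightedMoment (fun x => stdCdf (c * x + s * z)) 0 = stdCdf z := by
  have hmoment (u : ℝ) :
      weightedMoment (fun x => stdPdf (c * x + u)) 0 = s⁻¹ * stdPdf (s⁻¹ * u + 0) := by
    rw [add_zero, ← div_eq_inv_mul, ← weightedMoment_stdPdf_comp_affine_zero hs hsc,
      mul_inv_cancel_left₀ hs.ne']
  calc weightedMoment (fun x => stdCdf (c * x + s * z)) 0
      = ∫ x, ∫ u in Iic (s * z), stdPdf (c * x + u) * stdPdf x := by
        simp only [weightedMoment, pow_zero, one_mul, integral_mul_const,
          setIntegral_Iic_stdPdf_const_add]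
    _ = ∫ u in Iic (s * z), weightedMoment (fun x => stdPdf (c * x + u)) 0 := by
        rw [integral_integral_swap (integrable_prod_stdPdf_affine_mul_stdPdf c (s * z))]
        simp only [weightedMoment, pow_zero, one_mul]
    _ = stdCdf z := by
        simp only [hmoment]
        rw [setIntegral_Iic_stdPdf_comp_affine (inv_pos.2 hs), add_zero,
          inv_mul_cancel_left₀ hs.ne']

lemma weightedMoment_stdCdf_comp_affine_succ (c d : ℝ) (k : ℕ) :
    weightedMoment (fun x => stdCdf (c * x + d)) (k + 1) =
      k * weightedMoment (fun x => stdCdf (c * x + d)) (k - 1) +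
        c * weightedMoment (fun x => stdPdf (c * x + d)) k := by
  have hbound (x : ℝ) : ‖c * stdPdf (c * x + d)‖ ≤ ‖c‖ * (√(2 * π))⁻¹ := by
    rw [norm_mul]
    exact mul_le_mul_of_nonneg_left (norm_stdPdf_le _) (norm_nonneg c)
  rw [← weightedMoment_const_mul c]
  exact weightedMoment_succ (fun x => hasDerivAt_comp_affine (hasDerivAt_stdCdf _))
    (fun x => norm_stdCdf_le_one _) hbound k

lemma weightedMoment_stdCdf_comp_affine_one (hs : 0 < s) (hsc : s ^ 2 = 1 + c ^ 2) (z : ℝ) :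
    weightedMoment (fun x => stdCdf (c * x + s * z)) 1 = c * stdPdf z / s := by
  rw [weightedMoment_stdCdf_comp_affine_succ c _ 0, weightedMoment_stdPdf_comp_affine_zero hs hsc,
    Nat.cast_zero, zero_mul, zero_add, mul_div_assoc]

lemma weightedMoment_stdCdf_comp_affine_two (hs : 0 < s) (hsc : s ^ 2 = 1 + c ^ 2) (z : ℝ) :
    weightedMoment (fun x => stdCdf (c * x + s * z)) 2 =
      stdCdf z - c ^ 2 * z * stdPdf z / s ^ 2 := by
  rw [weightedMoment_stdCdf_comp_affine_succ c _ 1, weightedMoment_stdPdf_comp_affine_one hs hsc,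
    Nat.sub_self, weightedMoment_stdCdf_comp_affine_zero hs hsc, Nat.cast_one]
  ring

end ProbitWeight

theorem stmt3_general (a b μ σ : ℝ) (hσ : 0 < σ)
    (z : ℝ) (hz : z = (a * μ + b) / √(1 + a ^ 2 * σ ^ 2))
    (η : ℝ) (hη : η = stdCdf z)
    (p : ℝ → ℝ) (hp : p = fun x => η⁻¹ * stdCdf (a * x + b) * gPdf μ σ x)
    (μhat : ℝ) (hμhat : μhat = ∫ x : ℝ, x * p x) :
    (∫ x : ℝ, (x - μhat) ^ 2 * p x) =
      σ ^ 2 - a ^ 2 * σ ^ 4 * stdPdf z / ((1 + a ^ 2 * σ ^ 2) * η) * (z + stdPdf z / η) := by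
  have hη0 : η ≠ 0 := hη ▸ (stdCdf_pos z).ne'
  set s := √(1 + a ^ 2 * σ ^ 2)
  have hs : 0 < s := by positivity
  have hs_sq : s ^ 2 = 1 + a ^ 2 * σ ^ 2 := sq_sqrt (by positivity)
  have hsc : s ^ 2 = 1 + (a * σ) ^ 2 := by rw [hs_sq, mul_pow]
  have hstandardize : (fun w => stdCdf (a * (σ * w + μ) + b)) =
      fun w => stdCdf (a * σ * w + s * z) := by
    rw [hz, mul_div_cancel₀ _ hs.ne']
    ring_nf
  have hcont : Continuous fun x => stdCdf (a * x + b) := by fun_prop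
  have hmass : η = weightedMoment (fun w => stdCdf (a * (σ * w + μ) + b)) 0 := by
    rw [hstandardize, weightedMoment_stdCdf_comp_affine_zero hs hsc, hη]
  subst hp
  rw [variance_weighted_gPdf hcont.measurable (fun x => norm_stdCdf_le_one _) μ hσ hmass hη0
      hμhat, hstandardize, weightedMoment_stdCdf_comp_affine_one hs hsc,
    weightedMoment_stdCdf_comp_affine_two hs hsc,
    ← hη, ← hs_sq]
  field_simp
  ring

/-- Variance of the probit-tilted Gaussian `p(x) = η⁻¹ Φ(y x) φ(x; μ, σ²)` equals
`σ̂² = σ² − (σ⁴ φ(z)/((1+σ²) η)) (z + φ(z)/η)` where `z = yμ/√(1+σ²)`, `η = Φ(z)`. -/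
theorem stmt3 (y μ σ : ℝ) (hy : y = -1 ∨ y = 1) (hσ : 0 < σ)
    (z : ℝ) (hz : z = y * μ / Real.sqrt (1 + σ ^ 2))
    (η : ℝ) (hη : η = stdCdf z)
    (p : ℝ → ℝ) (hp : p = fun x => η⁻¹ * stdCdf (y * x) * gPdf μ σ x)
    (μhat : ℝ) (hμhat : μhat = ∫ x : ℝ, x * p x) :
    (∫ x : ℝ, (x - μhat) ^ 2 * p x) =
      σ ^ 2 - σ ^ 4 * stdPdf z / ((1 + σ ^ 2) * η) * (z + stdPdf z / η) := by
  have hy2 : y ^ 2 = 1 := by rcases hy with rfl | rfl <;> norm_num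
  simpa [hy2] using stmt3_general y 0 μ σ hσ z (by simpa [hy2] using hz) η hη p
    (by simpa using hp) μhat hμhat
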